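/- For every even positive integer n, 16·T(1,6,15;n) = 3·N(1,6,15;8n+22) − N(1,6,15;4(8n+22)). -/

import Mathlib

/-!
With `n = 2 k`, write `M = 8 n + 22 = 16 k + 22` and `Q = x² + 6 y² + 15 z²`. Completing the squares,
`8 T(n)` is the number `O` of solutions of `Q = M` with all variables odd. A solution of `Q = M` with
`x` odd has all variables odd, so `N(M) = O + E` with `E` the number of solutions with `x` even (then
`z` is even and `y` odd). The solutions of `Q = 4 M` with `x` even are the doubles of those of `Q = M`;
let `P` be the number of solutions of `Q = 4 M` with `x` odd (then `z` is odd and `y` even). The claim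
`2 O = 3 N(M) - N(4 M)` becomes `P = 2 E`.

Split `P = A + B` according to whether `4 ∤ y` or `4 ∣ y`, and `E = E₁ + E₂` according to whether
`8 ∤ x + z` or `8 ∣ x + z`. Then `A = 2 E₁` and `B = 2 E₂`:

* In `A` one has `64 ∣ x² + 15 z²`, hence exactly one of `x + 7 z`, `x - 7 z` is divisible by `32`.
  The sign change of `z` exchanges the two cases, and the solutions with `32 ∣ x + 7 z` correspond to
  `E₁` through multiplication of `x + z √-15` by `(-7 + √-15) / 2`, the square of the element
  `(1 + √-15) / 2` of norm `4` (`ncard_A`).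
* In `B` exactly one of `x + z`, `x - z` is divisible by `4`. Those with `4 ∣ x + z` correspond to `E₂`:
  in suitable coordinates both sets are the solutions of `6 y² + 40 s² + 24 w² = M` with `s ≡ w (mod 2)`,
  which for `B` uses that `M / 2 ≡ 3 (mod 8)` (`ncard_B`).
-/

/-- Number of representations of `n` as `a*x^2 + b*y^2 + c*z^2` with `x,y,z : ℤ`. -/
noncomputable def N (a b c n : ℕ) : ℕ :=
  Nat.card {p : ℤ × ℤ × ℤ //
    (a : ℤ) * p.1 ^ 2 + (b : ℤ) * p.2.1 ^ 2 + (c : ℤ) * p.2.2 ^ 2 = (n : ℤ)}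

/-- Number of representations of `n` as `a*x(x+1)/2 + b*y(y+1)/2 + c*z(z+1)/2` with `x,y,z : ℕ`. -/
noncomputable def T (a b c n : ℕ) : ℕ :=
  Nat.card {p : ℕ × ℕ × ℕ //
    a * (p.1 * (p.1 + 1) / 2) + b * (p.2.1 * (p.2.1 + 1) / 2)
      + c * (p.2.2 * (p.2.2 + 1) / 2) = n}

/-! ### Counting tools -/

/-- The solution set of `x² + 6 y² + 15 z² = c` in integers. -/
def sol (c : ℤ) : Set (ℤ × ℤ × ℤ) := {p | p.1 ^ 2 + 6 * p.2.1 ^ 2 + 15 * p.2.2 ^ 2 = c}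

lemma mem_sol {c x y z : ℤ} : (x, y, z) ∈ sol c ↔ x ^ 2 + 6 * y ^ 2 + 15 * z ^ 2 = c := Iff.rfl

lemma sol_finite (c : ℤ) : (sol c).Finite := by
  apply (((Set.finite_Icc (-c) c).prod ((Set.finite_Icc (-c) c).prod
    (Set.finite_Icc (-c) c)))).subset
  rintro ⟨x, y, z⟩ h
  rw [mem_sol] at h
  have key : ∀ t : ℤ, t ^ 2 ≤ c → -c ≤ t ∧ t ≤ c := by
    intro t ht
    constructor <;> nlinarith [Int.le_self_sq t, Int.le_self_sq (-t)]
  simp only [Set.mem_prod, Set.mem_Icc]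
  refine ⟨key x ?_, key y ?_, key z ?_⟩ <;> nlinarith [sq_nonneg x, sq_nonneg y, sq_nonneg z]

lemma N_eq (m : ℕ) : N 1 6 15 m = (sol m).ncard := by
  rw [← Nat.card_coe_set_eq]
  exact Nat.card_congr (Equiv.subtypeEquivRight (fun p => by simp [sol]))

lemma finite_sep {α : Type*} {S : Set α} (hS : S.Finite) (P : α → Prop) :
    {p | p ∈ S ∧ P p}.Finite := hS.subset fun _ h => h.1

lemma ncard_split {α : Type*} {S : Set α} (hS : S.Finite) (P : α → Prop) :
    S.ncard = {p | p ∈ S ∧ P p}.ncard + {p | p ∈ S ∧ ¬ P p}.ncard := by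
  rw [← Set.ncard_inter_add_ncard_sdiff_eq_ncard S {p | P p} hS]
  rfl

lemma ncard_bij {α β : Type*} {S : Set α} {S' : Set β} (f : α → β)
    (h1 : ∀ a ∈ S, f a ∈ S') (h2 : ∀ a ∈ S, ∀ b ∈ S, f a = f b → a = b)
    (h3 : ∀ b ∈ S', ∃ a ∈ S, f a = b) : S.ncard = S'.ncard :=
  Set.ncard_congr (fun a _ => f a) h1 (fun a b ha hb h => h2 a ha b hb h)
    (fun b hb => by obtain ⟨a, ha, h⟩ := h3 b hb; exact ⟨a, ha, h⟩)

/-- An involution of `S` that exchanges `P` and its negation shows that `P` holds on half of `S`. -/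
lemma ncard_half {α : Type*} {S : Set α} (hS : S.Finite) (P : α → Prop) (g : α → α)
    (hg : ∀ a, g (g a) = a) (hgS : ∀ a ∈ S, g a ∈ S) (hP : ∀ a ∈ S, (¬ P a ↔ P (g a))) :
    S.ncard = 2 * {p | p ∈ S ∧ P p}.ncard := by
  have h : {p | p ∈ S ∧ P p}.ncard = {p | p ∈ S ∧ ¬ P p}.ncard := by
    apply ncard_bij g
    · rintro a ⟨ha, hPa⟩
      exact ⟨hgS a ha, fun h => ((hP a ha).2 h) hPa⟩
    · intro a _ b _ hab
      rw [← hg a, hab, hg]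
    · rintro b ⟨hb, hPb⟩
      exact ⟨g b, ⟨hgS b hb, (hP b hb).1 hPb⟩, hg b⟩
  rw [ncard_split hS P, ← h]; ring

lemma sq_odd {x : ℤ} (h : x % 2 = 1) : ∃ q, x ^ 2 = 8 * q + 1 := by
  obtain ⟨q, hq⟩ := Int.eight_dvd_sq_sub_one_of_odd (Int.odd_iff.2 h)
  exact ⟨q, by linarith⟩

lemma sq_even {x : ℤ} (h : x % 2 = 0) : ∃ q, x ^ 2 = 4 * q := by
  obtain ⟨q, rfl⟩ := Int.dvd_of_emod_eq_zero h
  exact ⟨q ^ 2, by ring⟩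

/-! ### Triangular numbers and odd solutions -/

lemma two_mul_tri (x : ℕ) : 2 * ((x : ℤ) * (x + 1) / 2) = x * (x + 1) :=
  Int.mul_ediv_cancel' (Int.even_mul_succ_self (x : ℤ)).two_dvd

lemma T_eq (n : ℕ) : 8 * T 1 6 15 n =
    {p | p ∈ sol (8 * n + 22) ∧ (p.1 % 2 = 1 ∧ p.2.1 % 2 = 1 ∧ p.2.2 % 2 = 1)}.ncard := by
  have hT : T 1 6 15 n = {p | (((p ∈ sol (8 * n + 22) ∧
      (p.1 % 2 = 1 ∧ p.2.1 % 2 = 1 ∧ p.2.2 % 2 = 1)) ∧ 0 < p.1) ∧ 0 < p.2.1) ∧ 0 < p.2.2}.ncard := by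
    unfold T
    rw [← Set.coe_ofPred, Nat.card_coe_set_eq]
    apply ncard_bij (fun p => (2 * (p.1 : ℤ) + 1, 2 * (p.2.1 : ℤ) + 1, 2 * (p.2.2 : ℤ) + 1))
    · rintro ⟨x, y, z⟩ h
      simp only [Set.mem_ofPred_eq] at h
      have h' := congrArg (Nat.cast : ℕ → ℤ) h
      push_cast at h'
      have hx := two_mul_tri x
      have hy := two_mul_tri y
      have hz := two_mul_tri z
      simp only [Set.mem_ofPred_eq, mem_sol]
      refine ⟨⟨⟨⟨?_, by omega, by omega, by omega⟩, by omega⟩, by omega⟩, by omega⟩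
      linear_combination 8 * h' - 4 * hx - 24 * hy - 60 * hz
    · rintro ⟨x, y, z⟩ - ⟨x', y', z'⟩ - h
      simp only [Prod.mk.injEq] at h ⊢
      omega
    · rintro ⟨x, y, z⟩ ⟨⟨⟨⟨h, hx, hy, hz⟩, hx0⟩, hy0⟩, hz0⟩
      simp only at hx hy hz hx0 hy0 hz0
      obtain ⟨a, rfl⟩ : ∃ a : ℕ, x = 2 * a + 1 := ⟨((x - 1) / 2).toNat, by omega⟩
      obtain ⟨b, rfl⟩ : ∃ a : ℕ, y = 2 * a + 1 := ⟨((y - 1) / 2).toNat, by omega⟩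
      obtain ⟨c, rfl⟩ : ∃ a : ℕ, z = 2 * a + 1 := ⟨((z - 1) / 2).toNat, by omega⟩
      refine ⟨(a, b, c), ?_, rfl⟩
      rw [mem_sol] at h
      have ha := two_mul_tri a
      have hb := two_mul_tri b
      have hc := two_mul_tri c
      simp only [Set.mem_ofPred_eq]
      zify
      linarith
  have hf := sol_finite (8 * n + 22)
  have f1 := hf.subset (Set.sep_subset _
    (fun p => p.1 % 2 = 1 ∧ p.2.1 % 2 = 1 ∧ p.2.2 % 2 = 1))
  have f2 := finite_sep f1 (fun p => 0 < p.1)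
  have f3 := finite_sep f2 (fun p => 0 < p.2.1)
  rw [ncard_half f1 (fun p => 0 < p.1) (fun p => (-p.1, p.2.1, p.2.2)),
    ncard_half f2 (fun p => 0 < p.2.1) (fun p => (p.1, -p.2.1, p.2.2)),
    ncard_half f3 (fun p => 0 < p.2.2) (fun p => (p.1, p.2.1, -p.2.2)), hT]
  · simp only [Set.mem_ofPred_eq]
    ring
  all_goals
    rintro ⟨x, y, z⟩
    simp only [Set.mem_ofPred_eq, mem_sol, neg_neg, neg_sq]
    try omega

/-! ### Parities of solutions -/

lemma parity_M {k x y z : ℤ} (h : x ^ 2 + 6 * y ^ 2 + 15 * z ^ 2 = 16 * k + 22) :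
    y % 2 = 1 ∧ z % 2 = x % 2 := by
  rcases Int.emod_two_eq_zero_or_one x with hx | hx <;>
  rcases Int.emod_two_eq_zero_or_one y with hy | hy <;>
  rcases Int.emod_two_eq_zero_or_one z with hz | hz <;>
  first
  | obtain ⟨a, ha⟩ := sq_even hx
  | obtain ⟨a, ha⟩ := sq_odd hx
  all_goals first
  | obtain ⟨b, hb⟩ := sq_even hy
  | obtain ⟨b, hb⟩ := sq_odd hy
  all_goals first
  | obtain ⟨c, hc⟩ := sq_even hz
  | obtain ⟨c, hc⟩ := sq_odd hz
  all_goals omega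

lemma parity_four_M {k x y z : ℤ} (h : x ^ 2 + 6 * y ^ 2 + 15 * z ^ 2 = 4 * (16 * k + 22)) :
    y % 2 = 0 ∧ z % 2 = x % 2 := by
  rcases Int.emod_two_eq_zero_or_one x with hx | hx <;>
  rcases Int.emod_two_eq_zero_or_one y with hy | hy <;>
  rcases Int.emod_two_eq_zero_or_one z with hz | hz <;>
  first
  | obtain ⟨a, ha⟩ := sq_even hx
  | obtain ⟨a, ha⟩ := sq_odd hx
  all_goals first
  | obtain ⟨b, hb⟩ := sq_even hy
  | obtain ⟨b, hb⟩ := sq_odd hy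
  all_goals first
  | obtain ⟨c, hc⟩ := sq_even hz
  | obtain ⟨c, hc⟩ := sq_odd hz
  all_goals omega

/-- Follows from `M ≡ 6 (mod 16)`: for a solution of `Q = M` with `x` even, the halves of `x` and `z` have the same parity. -/
lemma halves_same_parity {k X y Z : ℤ}
    (h : (2 * X) ^ 2 + 6 * y ^ 2 + 15 * (2 * Z) ^ 2 = 16 * k + 22) : (X + Z) % 2 = 0 := by
  obtain ⟨b, hb⟩ := sq_odd (parity_M h).1
  have h' : 4 * X ^ 2 + 6 * y ^ 2 + 60 * Z ^ 2 = 16 * k + 22 := by linarith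
  rcases Int.emod_two_eq_zero_or_one X with hx | hx <;>
  rcases Int.emod_two_eq_zero_or_one Z with hz | hz <;>
  first
  | obtain ⟨a, ha⟩ := sq_even hx
  | obtain ⟨a, ha⟩ := sq_odd hx
  all_goals first
  | obtain ⟨c, hc⟩ := sq_even hz
  | obtain ⟨c, hc⟩ := sq_odd hz
  all_goals omega

/-! ### The two correspondences -/

/-- For solutions of `Q = 4 M` with `x` odd and `4 ∤ y`, exactly one of `x + 7 z` and `x - 7 z` is
divisible by `32`. -/
lemma A_dichotomy {k x y z : ℤ} (h : x ^ 2 + 6 * y ^ 2 + 15 * z ^ 2 = 4 * (16 * k + 22))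
    (hx : x % 2 = 1) (hy : ¬ y % 4 = 0) :
    ¬ (x + 7 * z) % 32 = 0 ↔ (x + 7 * -z) % 32 = 0 := by
  obtain ⟨hy2, hz⟩ := parity_four_M h
  obtain ⟨w, rfl⟩ : ∃ w, y = 2 * w := ⟨y / 2, by omega⟩
  obtain ⟨c, hc⟩ := sq_odd (x := w) (by omega)
  obtain ⟨u, hu⟩ : ∃ u, x + 7 * z = 2 * u := ⟨(x + 7 * z) / 2, by omega⟩
  obtain ⟨v, hv⟩ : ∃ v, x - 7 * z = 2 * v := ⟨(x - 7 * z) / 2, by omega⟩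
  have huv : (16 : ℤ) ∣ u * v := by
    refine ⟨k + 1 - 3 * c - z ^ 2, ?_⟩
    have : (2 * u) * (2 * v) = x ^ 2 - 49 * z ^ 2 := by rw [← hu, ← hv]; ring
    linarith
  have cop : ∀ t : ℤ, t % 2 = 1 → IsCoprime (16 : ℤ) t := by
    intro t ht
    have : IsCoprime (2 : ℤ) t := ⟨-(t / 2), 1, by omega⟩
    simpa using this.pow_left (m := 4)
  rcases Int.emod_two_eq_zero_or_one u with h0 | h1
  · have := (cop v (by omega)).dvd_of_dvd_mul_right huv
    omega
  · have := (cop u h1).dvd_of_dvd_mul_left huv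
    omega

/-- `A = 2 E₁`: the solutions of `Q = 4 M` with `x` odd and `4 ∤ y` against those of `Q = M` with `x` even
and `8 ∤ x + z`. -/
lemma ncard_A (k : ℤ) :
    {p | (p ∈ sol (4 * (16 * k + 22)) ∧ ¬ p.1 % 2 = 0) ∧ ¬ p.2.1 % 4 = 0}.ncard =
    2 * {p | (p ∈ sol (16 * k + 22) ∧ p.1 % 2 = 0) ∧ ¬ (p.1 + p.2.2) % 8 = 0}.ncard := by
  have hf : {p | (p ∈ sol (4 * (16 * k + 22)) ∧ ¬ p.1 % 2 = 0) ∧ ¬ p.2.1 % 4 = 0}.Finite :=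
    (sol_finite _).subset fun _ h => h.1.1
  rw [ncard_half hf
    (fun p => (p.1 + 7 * p.2.2) % 32 = 0) (fun p => (p.1, p.2.1, -p.2.2))]
  · congr 1
    symm
    -- `(x + z √-15) ↦ (x + z √-15) (-7 + √-15) / 4` (the halving of `x`, `z` is included)
    apply ncard_bij (fun p => ((-7 * p.1 - 15 * p.2.2) / 4, 2 * p.2.1, (p.1 - 7 * p.2.2) / 4))
    · rintro ⟨x, y, z⟩ ⟨⟨h, hx⟩, hs⟩
      rw [mem_sol] at h
      simp only at hx hs
      obtain ⟨hy, hz⟩ := parity_M h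
      obtain ⟨X, rfl⟩ : ∃ X, x = 2 * X := ⟨x / 2, by omega⟩
      obtain ⟨Z, rfl⟩ : ∃ Z, z = 2 * Z := ⟨z / 2, by omega⟩
      have hXZ := halves_same_parity h
      obtain ⟨r, rfl⟩ : ∃ r, X = 4 * r + 2 - Z := ⟨(X + Z) / 4, by omega⟩
      have e1 : (-7 * (2 * (4 * r + 2 - Z)) - 15 * (2 * Z)) / 4 = -14 * r - 7 - 4 * Z := by omega
      have e2 : (2 * (4 * r + 2 - Z) - 7 * (2 * Z)) / 4 = 2 * r + 1 - 4 * Z := by omega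
      simp only [Set.mem_ofPred_eq, mem_sol, e1, e2]
      refine ⟨⟨⟨?_, by omega⟩, by omega⟩, by omega⟩
      linear_combination 4 * h
    · rintro ⟨x, y, z⟩ ⟨⟨h, hx⟩, hs⟩ ⟨x', y', z'⟩ ⟨⟨h', hx'⟩, hs'⟩ hh
      rw [mem_sol] at h h'
      simp only [Prod.mk.injEq] at hx hs hx' hs' hh ⊢
      have hz := (parity_M h).2
      have hz' := (parity_M h').2
      obtain ⟨X, rfl⟩ : ∃ X, x = 2 * X := ⟨x / 2, by omega⟩
      obtain ⟨Z, rfl⟩ : ∃ Z, z = 2 * Z := ⟨z / 2, by omega⟩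
      obtain ⟨X', rfl⟩ : ∃ X, x' = 2 * X := ⟨x' / 2, by omega⟩
      obtain ⟨Z', rfl⟩ : ∃ Z, z' = 2 * Z := ⟨z' / 2, by omega⟩
      have := halves_same_parity h
      have := halves_same_parity h'
      omega
    · rintro ⟨x, y, z⟩ ⟨⟨⟨h, hx⟩, hy⟩, hs⟩
      rw [mem_sol] at h
      simp only at hx hy hs
      obtain ⟨hy2, hz⟩ := parity_four_M h
      obtain ⟨w, rfl⟩ : ∃ w, y = 2 * w := ⟨y / 2, by omega⟩
      obtain ⟨Z, hZ⟩ : ∃ Z, x + 7 * z = -32 * Z := ⟨-((x + 7 * z) / 32), by omega⟩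
      obtain ⟨r, rfl⟩ : ∃ r, z = 2 * r + 1 - 4 * Z := ⟨(z - 1 + 4 * Z) / 2, by omega⟩
      obtain rfl : x = -14 * r - 7 - 4 * Z := by omega
      refine ⟨(2 * (4 * r + 2 - Z), w, 2 * Z), ⟨⟨?_, ?_⟩, ?_⟩, ?_⟩
      · rw [mem_sol]; linarith
      · simp only; omega
      · simp only; omega
      · simp only [Prod.mk.injEq, true_and]
        omega
  · rintro ⟨x, y, z⟩
    simp
  · rintro ⟨x, y, z⟩
    simp only [Set.mem_ofPred_eq, mem_sol, neg_sq]
    exact id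
  · rintro ⟨x, y, z⟩ ⟨⟨h, hx⟩, hy⟩
    rw [mem_sol] at h
    simp only at hx hy ⊢
    exact A_dichotomy h (by omega) hy

/-- `B = 2 E₂`: the solutions of `Q = 4 M` with `x` odd and `4 ∣ y` against those of `Q = M` with `x` even
and `8 ∣ x + z`. -/
lemma ncard_B (k : ℤ) :
    {p | (p ∈ sol (4 * (16 * k + 22)) ∧ ¬ p.1 % 2 = 0) ∧ p.2.1 % 4 = 0}.ncard =
    2 * {p | (p ∈ sol (16 * k + 22) ∧ p.1 % 2 = 0) ∧ (p.1 + p.2.2) % 8 = 0}.ncard := by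
  have hf : {p | (p ∈ sol (4 * (16 * k + 22)) ∧ ¬ p.1 % 2 = 0) ∧ p.2.1 % 4 = 0}.Finite :=
    (sol_finite _).subset fun _ h => h.1.1
  rw [ncard_half hf
    (fun p => (p.1 + p.2.2) % 4 = 0) (fun p => (p.1, p.2.1, -p.2.2))]
  · congr 1
    symm
    -- With `x + z = 8 t` and `z = 2 Z`, put `s = t - Z`, `w = t + Z`; the solution `(x, y, z)` goes to
    -- `(3 y + 10 s, 4 w, y - 2 s)`.
    apply ncard_bij (fun p => (3 * p.2.1 + 10 * ((p.1 + p.2.2) / 8 - p.2.2 / 2),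
      4 * ((p.1 + p.2.2) / 8 + p.2.2 / 2), p.2.1 - 2 * ((p.1 + p.2.2) / 8 - p.2.2 / 2)))
    · rintro ⟨x, y, z⟩ ⟨⟨h, hx⟩, hs⟩
      rw [mem_sol] at h
      simp only at hx hs
      obtain ⟨hy, hz⟩ := parity_M h
      obtain ⟨Z, rfl⟩ : ∃ Z, z = 2 * Z := ⟨z / 2, by omega⟩
      obtain ⟨t, rfl⟩ : ∃ t, x = 8 * t - 2 * Z := ⟨(x + 2 * Z) / 8, by omega⟩
      have e1 : (8 * t - 2 * Z + 2 * Z) / 8 = t := by omega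
      have e2 : 2 * Z / 2 = Z := by omega
      simp only [Set.mem_ofPred_eq, mem_sol, e1, e2]
      refine ⟨⟨⟨?_, by omega⟩, by omega⟩, by omega⟩
      linear_combination 4 * h
    · rintro ⟨x, y, z⟩ ⟨⟨h, hx⟩, hs⟩ ⟨x', y', z'⟩ ⟨⟨h', hx'⟩, hs'⟩ hh
      rw [mem_sol] at h h'
      simp only [Prod.mk.injEq] at hx hs hx' hs' hh ⊢
      have hz := (parity_M h).2
      have hz' := (parity_M h').2
      omega
    · rintro ⟨x, y, z⟩ ⟨⟨⟨h, hx⟩, hy⟩, hs⟩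
      rw [mem_sol] at h
      simp only at hx hy hs
      have hz : z % 2 = 1 := by have := (parity_four_M h).2; omega
      obtain ⟨w, rfl⟩ : ∃ w, y = 4 * w := ⟨y / 4, by omega⟩
      obtain ⟨t, rfl⟩ : ∃ t, x = 4 * t - z := ⟨(x + z) / 4, by omega⟩
      have h1 : 2 * t ^ 2 - t * z + 2 * z ^ 2 + 12 * w ^ 2 = 8 * k + 11 := by linarith
      have ht : t % 2 = 1 := by
        by_contra ht
        obtain ⟨a, rfl⟩ : ∃ a, t = 2 * a := ⟨t / 2, by omega⟩
        have : 2 * (4 * a ^ 2 - a * z + z ^ 2 + 6 * w ^ 2) = 8 * k + 11 := by linarith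
        omega
      obtain ⟨e, rfl⟩ : ∃ e, t = z + 2 * e := ⟨(t - z) / 2, by omega⟩
      obtain ⟨c, hc⟩ := sq_odd hz
      have h2 : 3 * (e * z) + 4 * e ^ 2 + 6 * w ^ 2 + 12 * c = 4 * k + 4 := by linarith
      have he : e % 2 = 0 := by
        have : (e * z) % 2 = 0 := by omega
        rw [Int.mul_emod, hz] at this
        omega
      obtain ⟨s, rfl⟩ : ∃ s, e = 2 * s := ⟨e / 2, by omega⟩
      -- `s z + w²` is even and `z` is odd, hence `s ≡ w (mod 2)`
      have hsw : (s + w) % 2 = 0 := by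
        have h3 : 3 * (s * z) + 8 * s ^ 2 + 3 * w ^ 2 + 6 * c = 2 * k + 2 := by linarith
        have h4 : (s * z + w * w) % 2 = 0 := by
          rw [← sq]; omega
        rw [Int.add_emod, Int.mul_emod s z, Int.mul_emod w w, hz] at h4
        rcases Int.emod_two_eq_zero_or_one s with h5 | h5 <;>
        rcases Int.emod_two_eq_zero_or_one w with h6 | h6 <;>
        rw [h5, h6] at h4 <;> omega
      obtain ⟨Z, hZ⟩ : ∃ Z, w = s + 2 * Z := ⟨(w - s) / 2, by omega⟩
      subst hZ
      refine ⟨(8 * (s + Z) - 2 * Z, z + 2 * s, 2 * Z), ⟨⟨?_, ?_⟩, ?_⟩, ?_⟩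
      · rw [mem_sol]; linarith
      · simp only; omega
      · simp only; omega
      · simp only [Prod.mk.injEq]
        omega
  · rintro ⟨x, y, z⟩
    simp
  · rintro ⟨x, y, z⟩
    simp only [Set.mem_ofPred_eq, mem_sol, neg_sq]
    exact id
  · rintro ⟨x, y, z⟩ ⟨⟨h, hx⟩, hy⟩
    rw [mem_sol] at h
    have hz := (parity_four_M h).2
    simp only at hx hy ⊢
    omega

/-! ### Assembling the counts -/

lemma ncard_double (k : ℤ) :
    {p | p ∈ sol (4 * (16 * k + 22)) ∧ p.1 % 2 = 0}.ncard = (sol (16 * k + 22)).ncard := by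
  symm
  apply ncard_bij (fun p => (2 * p.1, 2 * p.2.1, 2 * p.2.2))
  · rintro ⟨x, y, z⟩ h
    rw [mem_sol] at h
    simp only [Set.mem_ofPred_eq, mem_sol]
    exact ⟨by linarith, by omega⟩
  · rintro ⟨x, y, z⟩ - ⟨x', y', z'⟩ - h
    simp only [Prod.mk.injEq] at h ⊢
    omega
  · rintro ⟨x, y, z⟩ ⟨h, hx⟩
    rw [mem_sol] at h
    simp only at hx
    obtain ⟨hy, hz⟩ := parity_four_M h
    obtain ⟨X, rfl⟩ : ∃ X, x = 2 * X := ⟨x / 2, by omega⟩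
    obtain ⟨Y, rfl⟩ : ∃ X, y = 2 * X := ⟨y / 2, by omega⟩
    obtain ⟨Z, rfl⟩ : ∃ X, z = 2 * X := ⟨z / 2, by omega⟩
    exact ⟨(X, Y, Z), by rw [mem_sol]; linarith, rfl⟩

theorem stmt_14 (n : ℕ) (hn : 0 < n) (hpar : Even n) :
    (16 * T 1 6 15 n : ℤ) = 3 * (N 1 6 15 (8 * n + 22) : ℤ) - (N 1 6 15 (4 * (8 * n + 22)) : ℤ) := by
  obtain ⟨k, hk⟩ := hpar
  have hM : (8 * (n : ℤ) + 22) = 16 * (k : ℤ) + 22 := by omega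
  have hT := T_eq n
  rw [N_eq, N_eq]
  push_cast
  rw [hM] at hT ⊢
  have hO : {p | p ∈ sol (16 * k + 22) ∧ (p.1 % 2 = 1 ∧ p.2.1 % 2 = 1 ∧ p.2.2 % 2 = 1)} =
      {p | p ∈ sol (16 * k + 22) ∧ ¬ p.1 % 2 = 0} := by
    ext ⟨x, y, z⟩
    simp only [Set.mem_ofPred_eq, mem_sol]
    refine and_congr_right fun h => ?_
    have := parity_M h
    omega
  rw [hO] at hT
  have hf := sol_finite (16 * k + 22)
  have hf4 := sol_finite (4 * (16 * k + 22))
  have s1 := ncard_split hf (fun p => p.1 % 2 = 0)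
  have s2 := ncard_split (finite_sep hf (fun p => p.1 % 2 = 0))
    (fun p => (p.1 + p.2.2) % 8 = 0)
  have s3 := ncard_split hf4 (fun p => p.1 % 2 = 0)
  have s4 := ncard_split (finite_sep hf4 (fun p => ¬ p.1 % 2 = 0))
    (fun p => p.2.1 % 4 = 0)
  have hA := ncard_A k
  have hB := ncard_B k
  have hD := ncard_double k
  simp only [Set.mem_ofPred_eq] at s1 s2 s3 s4
  omega
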